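/- arXiv:1407.7012 — 2 statements merged into one kernel-verified Lean document; each statement's English description precedes it below -/
import Mathlib

section
/- For every even integer n ≥ 2, the polynomial δ_n, viewed as a polynomial with complex coefficients, is not the square of any polynomial in ℂ[k]. -/
/-!
Each `δ n` is an even polynomial, so a square root `g` of it satisfies `g(-k) = ± g(k)`; hence all
exponents occurring in `g` have the same parity, and the degree and the order of vanishing at `0`
of `δ n = g²` agree modulo `4`. But `δ n` has degree `2 ^ n`, while for even `n` its order at `0`
is `2` modulo `4`: the lowest terms of a sum of two squares over an ordered ring cannot cancel, so
the orders of `δ n` and `ε n` obey an explicit recursion.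
-/

open Polynomial

section Parity

variable {R : Type*} [CommRing R]

theorem coeff_comp_neg_X (p : R[X]) (n : ℕ) : (p.comp (-X)).coeff n = p.coeff n * (-1) ^ n := by
  rw [show (-X : R[X]) = C (-1) * X by simp, comp_C_mul_X_coeff]

variable [NoZeroDivisors R]

theorem neg_one_pow_eq_of_comp_neg_X_eq_C_mul {p : R[X]} {u : R} {n : ℕ}
    (hp : p.comp (-X) = C u * p) (hn : n ∈ p.support) : (-1) ^ n = u := by
  have hcoeff : p.coeff n * (-1) ^ n = p.coeff n * u := by
    rw [← coeff_comp_neg_X, hp, coeff_C_mul, mul_comm]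
  exact mul_left_cancel₀ (mem_support_iff.mp hn) hcoeff

theorem natDegree_modEq_two_natTrailingDegree_of_comp_neg_X_eq_C_mul (h : (-1 : R) ≠ 1)
    {p : R[X]} {u : R} (hp : p.comp (-X) = C u * p) :
    p.natDegree ≡ p.natTrailingDegree [MOD 2] := by
  obtain rfl | hp0 := eq_or_ne p 0
  · simp [Nat.ModEq]
  have hpow : (-1 : R) ^ p.natDegree = (-1) ^ p.natTrailingDegree :=
    (neg_one_pow_eq_of_comp_neg_X_eq_C_mul hp (natDegree_mem_support_of_nonzero hp0)).trans
      (neg_one_pow_eq_of_comp_neg_X_eq_C_mul hp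
        (natTrailingDegree_mem_support_of_nonzero hp0)).symm
  have heven : Even p.natDegree ↔ Even p.natTrailingDegree := by
    rw [← neg_one_pow_eq_one_iff_even h, hpow, neg_one_pow_eq_one_iff_even h]
  grind [Nat.ModEq]

theorem natDegree_modEq_four_natTrailingDegree_of_isSquare_of_comp_neg_X_eq (h : (-1 : R) ≠ 1)
    {p : R[X]} (hp : IsSquare p) (heven : p.comp (-X) = p) :
    p.natDegree ≡ p.natTrailingDegree [MOD 4] := by
  obtain ⟨g, rfl⟩ := hp
  obtain rfl | hg := eq_or_ne g 0
  · simp [Nat.ModEq]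
  rw [natDegree_mul hg hg, natTrailingDegree_mul hg hg, ← two_mul, ← two_mul]
  refine Nat.ModEq.mul_left' (n := 2) 2 ?_
  rw [mul_comp, mul_self_eq_mul_self_iff] at heven
  rcases heven with hsame | hopposite
  · exact natDegree_modEq_two_natTrailingDegree_of_comp_neg_X_eq_C_mul (u := 1) h (by simpa)
  · exact natDegree_modEq_two_natTrailingDegree_of_comp_neg_X_eq_C_mul (u := -1) h (by simpa)

end Parity

theorem natTrailingDegree_map_of_injective {R S : Type*} [Semiring R] [Semiring S] {φ : R →+* S}
    (hφ : Function.Injective φ) (p : R[X]) :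
    (p.map φ).natTrailingDegree = p.natTrailingDegree := by
  obtain rfl | hp := eq_or_ne p 0
  · simp
  have hp' : p.map φ ≠ 0 := (Polynomial.map_ne_zero_iff hφ).mpr hp
  simp only [natTrailingDegree_eq_support_min' hp, natTrailingDegree_eq_support_min' hp',
    support_map_of_injective p hφ]

theorem natTrailingDegree_sq_add_sq {R : Type*} [CommRing R] [LinearOrder R]
    [IsStrictOrderedRing R] {p q : R[X]} (hp : p ≠ 0) (hq : q ≠ 0) :
    (p ^ 2 + q ^ 2).natTrailingDegree = 2 * min p.natTrailingDegree q.natTrailingDegree := by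
  wlog hle : p.natTrailingDegree ≤ q.natTrailingDegree generalizing p q
  · rw [add_comm, min_comm, this hq hp (le_of_not_ge hle)]
  rw [min_eq_left hle]
  set m := p.natTrailingDegree
  obtain ⟨r, hr⟩ : X ^ m ∣ p :=
    X_pow_dvd_iff.mpr fun d hd ↦ coeff_eq_zero_of_lt_natTrailingDegree hd
  obtain ⟨s, hs⟩ : X ^ m ∣ q :=
    X_pow_dvd_iff.mpr fun d hd ↦ coeff_eq_zero_of_lt_natTrailingDegree (hd.trans_le hle)
  have hr0 : r.coeff 0 ≠ 0 := by
    have hpm : p.coeff m ≠ 0 := coeff_natTrailingDegree_ne_zero.mpr hp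
    rwa [hr, coeff_X_pow_mul', if_pos le_rfl, Nat.sub_self] at hpm
  have hrs0 : (r ^ 2 + s ^ 2).coeff 0 ≠ 0 := by
    have hpos : 0 < r.coeff 0 ^ 2 + s.coeff 0 ^ 2 := by positivity
    simpa [coeff_zero_eq_eval_zero] using hpos.ne'
  have hrs : r ^ 2 + s ^ 2 ≠ 0 := fun h ↦ hrs0 (by rw [h, coeff_zero])
  have hfactor : p ^ 2 + q ^ 2 = (r ^ 2 + s ^ 2) * X ^ (2 * m) := by rw [hr, hs]; ring
  rw [hfactor, natTrailingDegree_mul_X_pow hrs, natTrailingDegree_eq_zero.mpr (.inr hrs0),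
    zero_add]

/-- The sequences `δ` and `ε` of the theorem, over an arbitrary commutative ring. They start at
index `1`, and the values at `0` are arbitrary. Since `X` is not a zero divisor, the last condition
determines `ε (n + 1)`. -/
structure IsDeltaEpsilon {R : Type*} [CommRing R] (δ ε : ℕ → R[X]) : Prop where
  delta_one : δ 1 = C 2 * X ^ 2
  epsilon_one : ε 1 = X
  delta_succ : ∀ n, 1 ≤ n → δ (n + 1) = δ n ^ 2 + ε n ^ 2
  X_mul_epsilon_succ : ∀ n, 1 ≤ n → X * ε (n + 1) = δ n * ε n

namespace IsDeltaEpsilon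

section CommRing

variable {R : Type*} [CommRing R] {δ ε : ℕ → R[X]}

theorem comp_neg_X_delta_epsilon_sq (h : IsDeltaEpsilon δ ε) {n : ℕ} (hn : 1 ≤ n) :
    (δ n).comp (-X) = δ n ∧ (ε n ^ 2).comp (-X) = ε n ^ 2 := by
  induction n, hn using Nat.le_induction with
  | base => simp [h.delta_one, h.epsilon_one]
  | succ n hn ih =>
    obtain ⟨hδ, hε⟩ := ih
    refine ⟨by rw [h.delta_succ n hn, add_comp, pow_comp, hδ, hε], ?_⟩
    have hsq : X ^ 2 * ε (n + 1) ^ 2 = δ n ^ 2 * ε n ^ 2 := by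
      rw [← mul_pow, ← mul_pow, h.X_mul_epsilon_succ n hn]
    refine (isRegular_X_pow 2).left (?_ : X ^ 2 * _ = X ^ 2 * _)
    calc X ^ 2 * (ε (n + 1) ^ 2).comp (-X)
        = (X ^ 2 * ε (n + 1) ^ 2).comp (-X) := by simp
      _ = X ^ 2 * ε (n + 1) ^ 2 := by rw [hsq, mul_comp, pow_comp, hδ, hε]

end CommRing

section NoZeroDivisors

variable {R : Type*} [CommRing R] [NoZeroDivisors R] [NeZero (2 : R)] {δ ε : ℕ → R[X]}

theorem natDegree_delta_epsilon (h : IsDeltaEpsilon δ ε) {n : ℕ} (hn : 1 ≤ n) :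
    (δ n).natDegree = 2 ^ n ∧ (ε n).natDegree + n = 2 ^ n := by
  have : Nontrivial R := ⟨2, 0, two_ne_zero⟩
  induction n, hn using Nat.le_induction with
  | base =>
    rw [h.delta_one, h.epsilon_one, natDegree_C_mul_X_pow 2 2 two_ne_zero, natDegree_X]
    simp
  | succ n hn ih =>
    obtain ⟨hδ, hε⟩ := ih
    have hlt_pow : n < 2 ^ n := Nat.lt_two_pow_self
    have hδ0 : δ n ≠ 0 := ne_zero_of_natDegree_gt (n := 0) (by omega)
    have hε0 : ε n ≠ 0 := ne_zero_of_natDegree_gt (n := 0) (by omega)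
    have hε0' : ε (n + 1) ≠ 0 :=
      right_ne_zero_of_mul (h.X_mul_epsilon_succ n hn ▸ mul_ne_zero hδ0 hε0)
    constructor
    · have hlt : (ε n ^ 2).natDegree < (δ n ^ 2).natDegree := by
        rw [natDegree_pow, natDegree_pow, hδ]
        omega
      rw [h.delta_succ n hn, natDegree_add_eq_left_of_natDegree_lt hlt, natDegree_pow, hδ]
      ring
    · have hadd : (ε (n + 1)).natDegree + 1 = (δ n).natDegree + (ε n).natDegree := by
        rw [← natDegree_X_mul hε0', h.X_mul_epsilon_succ n hn, natDegree_mul hδ0 hε0]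
      rw [pow_succ]
      omega

theorem delta_ne_zero (h : IsDeltaEpsilon δ ε) {n : ℕ} (hn : 1 ≤ n) : δ n ≠ 0 :=
  ne_zero_of_natDegree_gt (n := 0) (by rw [(h.natDegree_delta_epsilon hn).1]; positivity)

theorem epsilon_ne_zero (h : IsDeltaEpsilon δ ε) {n : ℕ} (hn : 1 ≤ n) : ε n ≠ 0 := by
  have hlt_pow : n < 2 ^ n := Nat.lt_two_pow_self
  have hdeg := (h.natDegree_delta_epsilon hn).2
  exact ne_zero_of_natDegree_gt (n := 0) (by omega)

theorem natTrailingDegree_epsilon_succ (h : IsDeltaEpsilon δ ε) {n : ℕ} (hn : 1 ≤ n) :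
    (ε (n + 1)).natTrailingDegree + 1 = (δ n).natTrailingDegree + (ε n).natTrailingDegree := by
  have : Nontrivial R := ⟨2, 0, two_ne_zero⟩
  rw [← natTrailingDegree_mul (h.delta_ne_zero hn) (h.epsilon_ne_zero hn),
    ← h.X_mul_epsilon_succ n hn,
    natTrailingDegree_mul X_ne_zero (h.epsilon_ne_zero (by omega)), natTrailingDegree_X, add_comm]

end NoZeroDivisors

section Ordered

variable {R : Type*} [CommRing R] [LinearOrder R] [IsStrictOrderedRing R] {δ ε : ℕ → R[X]}

theorem natTrailingDegree_delta_succ (h : IsDeltaEpsilon δ ε) {n : ℕ} (hn : 1 ≤ n) :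
    (δ (n + 1)).natTrailingDegree =
      2 * min (δ n).natTrailingDegree (ε n).natTrailingDegree := by
  rw [h.delta_succ n hn, natTrailingDegree_sq_add_sq (h.delta_ne_zero hn) (h.epsilon_ne_zero hn)]

theorem natTrailingDegree_delta_epsilon_of_odd (h : IsDeltaEpsilon δ ε) (j : ℕ) :
    (δ (2 * j + 1)).natTrailingDegree = (ε (2 * j + 1)).natTrailingDegree + 1 ∧
      Odd (ε (2 * j + 1)).natTrailingDegree := by
  induction j with
  | zero =>
    have htwo : (C 2 : R[X]) ≠ 0 := C_ne_zero.mpr two_ne_zero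
    simp [h.delta_one, h.epsilon_one, natTrailingDegree_mul_X_pow htwo]
  | succ j ih =>
    have hδ := h.natTrailingDegree_delta_succ (n := 2 * j + 1) (by omega)
    have hε := h.natTrailingDegree_epsilon_succ (n := 2 * j + 1) (by omega)
    have hδ' := h.natTrailingDegree_delta_succ (n := 2 * j + 1 + 1) (by omega)
    have hε' := h.natTrailingDegree_epsilon_succ (n := 2 * j + 1 + 1) (by omega)
    rw [Nat.odd_iff] at ih ⊢
    have hequal :
        (δ (2 * j + 1 + 1)).natTrailingDegree = (ε (2 * j + 1 + 1)).natTrailingDegree := by omega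
    rw [show 2 * (j + 1) + 1 = 2 * j + 1 + 1 + 1 by ring]
    omega

theorem natTrailingDegree_delta_modEq_of_even (h : IsDeltaEpsilon δ ε) {n : ℕ} (hn : 1 ≤ n)
    (hne : Even n) : (δ n).natTrailingDegree ≡ 2 [MOD 4] := by
  obtain ⟨j, rfl⟩ : ∃ j, n = 2 * j + 1 + 1 := by
    obtain ⟨i, rfl⟩ := hne
    exact ⟨i - 1, by omega⟩
  obtain ⟨hδε, i, hi⟩ := h.natTrailingDegree_delta_epsilon_of_odd j
  have hδ := h.natTrailingDegree_delta_succ (n := 2 * j + 1) (by omega)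
  rw [Nat.ModEq]
  omega

end Ordered

end IsDeltaEpsilon

theorem stmt_14_general {R S : Type*} [CommRing R] [LinearOrder R] [IsStrictOrderedRing R]
    [CommRing S] [NoZeroDivisors S] {φ : R →+* S} (hφ : Function.Injective φ) {δ ε : ℕ → R[X]}
    (h : IsDeltaEpsilon δ ε) {n : ℕ} (hn : 1 ≤ n) (hne : Even n) :
    ¬ IsSquare ((δ n).map φ) := by
  intro hsq
  have hneg : (-1 : S) ≠ 1 := by
    simpa using hφ.ne (neg_one_lt_zero.trans one_pos : (-1 : R) < 1).ne
  have heven : ((δ n).map φ).comp (-X) = (δ n).map φ := by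
    simpa [map_comp] using congrArg (map φ) (h.comp_neg_X_delta_epsilon_sq hn).1
  have hmod : 2 ^ n ≡ (δ n).natTrailingDegree [MOD 4] := by
    simpa only [natDegree_map_eq_of_injective hφ, natTrailingDegree_map_of_injective hφ,
      (h.natDegree_delta_epsilon hn).1] using
      natDegree_modEq_four_natTrailingDegree_of_isSquare_of_comp_neg_X_eq hneg hsq heven
  have hdvd : 2 ^ n ≡ 0 [MOD 4] :=
    Nat.modEq_zero_iff_dvd.mpr (pow_dvd_pow 2 (by grind : 2 ≤ n))
  exact absurd (hdvd.symm.trans (hmod.trans (h.natTrailingDegree_delta_modEq_of_even hn hne)))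
    (by decide)

/-- for the sequences `δ_n, ε_n ∈ ℤ[k]` given by `δ_1 = 2k²`, `ε_1 = k`,
`δ_n = δ_{n−1}² + ε_{n−1}²` and `k·ε_n = δ_{n−1}·ε_{n−1}` (for `n ≥ 2`): for every even
`n ≥ 2`, the polynomial `δ_n`, viewed in `ℂ[k]`, is not the square of any polynomial. -/
theorem stmt_14 (δ ε : ℕ → Polynomial ℤ)
    (hδ1 : δ 1 = Polynomial.C 2 * Polynomial.X ^ 2)
    (hε1 : ε 1 = Polynomial.X)
    (hδ : ∀ n, 2 ≤ n → δ n = (δ (n - 1)) ^ 2 + (ε (n - 1)) ^ 2)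
    (hε : ∀ n, 2 ≤ n → Polynomial.X * ε n = δ (n - 1) * ε (n - 1))
    (n : ℕ) (hn : 2 ≤ n) (hne : Even n) :
    ¬ ∃ g : Polynomial ℂ, (δ n).map (Int.castRingHom ℂ) = g ^ 2 := by
  rw [← isSquare_iff_exists_sq]
  exact stmt_14_general (RingHom.injective_int _)
    ⟨hδ1, hε1, fun m hm ↦ hδ (m + 1) (by omega), fun m hm ↦ hε (m + 1) (by omega)⟩ (by omega) hne
end

section
/- Fix an integer n ≥ 2. Then the set of nonzero integers k₀ such that δ_n(k₀) is a square in ℤ is finite. -/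
/-!
This is Runge's method. If `f : ℤ[X]` has even degree and square leading coefficient, then some
nonzero multiple `D² f` is `Q² + r` with `deg r < deg Q`. When `f k = a²`, the remainder
`r k = (D a)² - (Q k)²` is a difference of two integer squares, so it is either `0` or at least
`|Q k|` in absolute value. Each case leaves finitely many `k`, unless `r = 0`, that is, unless `f`
is itself a square.

For `n ≥ 2` the polynomial `δ n` has leading term that of `(δ (n - 1))²`, and it is not a square
because its value at `1` is `2` modulo `3`.
-/

open Polynomial

theorem degree_sq_lt_degree_sq {R : Type*} [Semiring R] [NoZeroDivisors R] {p q : R[X]}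
    (h : p.degree < q.degree) : (p ^ 2).degree < (q ^ 2).degree := by
  have hq : q.degree ≠ ⊥ := degree_ne_bot.mpr (ne_zero_of_degree_gt h)
  calc (p ^ 2).degree = p.degree + p.degree := by rw [sq, degree_mul]
    _ ≤ q.degree + p.degree := by gcongr
    _ < q.degree + q.degree := WithBot.add_lt_add_left hq h
    _ = (q ^ 2).degree := by rw [sq, degree_mul]

theorem exists_degree_sub_sq_lt_of_isSquare_leadingCoeff {R : Type*} [CommRing R]
    {f : R[X]} (hf : f ≠ 0) (heven : Even f.natDegree) (hlead : IsSquare f.leadingCoeff) :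
    ∃ P : R[X], (f - P ^ 2).degree < (P ^ 2).degree := by
  obtain ⟨d, hd⟩ := heven
  obtain ⟨b, hb⟩ := hlead
  have leading_term : (C b * X ^ d) ^ 2 = C f.leadingCoeff * X ^ f.natDegree := by
    rw [hb, hd, C_mul]
    ring
  refine ⟨C b * X ^ d, ?_⟩
  rw [leading_term]
  have hlc : f.leadingCoeff ≠ 0 := leadingCoeff_ne_zero.mpr hf
  refine degree_sub_lt_right ?_ ?_ ?_
  · rw [degree_C_mul_X_pow _ hlc, degree_eq_natDegree hf]
  · rwa [← leadingCoeff_ne_zero, leadingCoeff_C_mul_X_pow]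
  · rw [leadingCoeff_C_mul_X_pow]

section Domain

variable {R : Type*} [CommRing R] [IsDomain R]

theorem exists_degree_sub_sq_lt_degree_sub_sq (h2 : (2 : R) ≠ 0) {f P : R[X]}
    (hlow : P.degree ≤ (f - P ^ 2).degree) (hhigh : (f - P ^ 2).degree < (P ^ 2).degree) :
    ∃ D : R, D ≠ 0 ∧ ∃ Q : R[X], Q.degree = P.degree ∧
      (C D ^ 2 * f - Q ^ 2).degree < (f - P ^ 2).degree := by
  have hP : P ≠ 0 := by
    rintro rfl
    simp at hhigh
  set r := f - P ^ 2 with hr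
  have hr0 : r ≠ 0 := by
    intro h
    simp [h, hP] at hlow
  have natDegree_le : P.natDegree ≤ r.natDegree := natDegree_le_natDegree hlow
  have natDegree_lt : r.natDegree < 2 * P.natDegree := by
    simpa only [natDegree_pow] using natDegree_lt_natDegree hr0 hhigh
  set a := P.leadingCoeff with ha
  set c := r.leadingCoeff with hc
  set m := r.natDegree - P.natDegree with hm
  have hD : 2 * a ≠ 0 := mul_ne_zero h2 (leadingCoeff_ne_zero.mpr hP)
  -- This is `P + (c / (2 * a)) * X ^ m`, which cancels the top term of `r`, scaled by `2 * a`.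
  refine ⟨2 * a, hD, C (2 * a) * P + C c * X ^ m, ?_, ?_⟩
  · rw [degree_add_eq_left_of_degree_lt, degree_C_mul hD]
    rw [degree_C_mul hD, degree_eq_natDegree hP]
    exact (degree_C_mul_X_pow_le m c).trans_lt (by exact_mod_cast (by omega : m < P.natDegree))
  · have error_eq : C (2 * a) ^ 2 * f - (C (2 * a) * P + C c * X ^ m) ^ 2 =
        C (4 * a) * P.cancelLeads r - C (c ^ 2) * X ^ (2 * m) := by
      rw [cancelLeads, Nat.sub_eq_zero_of_le natDegree_le, ← ha, ← hc, ← hm, hr]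
      simp only [C_mul, C_pow, C_ofNat]
      ring
    have leading_part : (C (4 * a) * P.cancelLeads r).natDegree < r.natDegree :=
      (natDegree_C_mul_le _ _).trans_lt
        (natDegree_cancelLeads_lt_of_natDegree_le_natDegree natDegree_le (by omega))
    have correction_sq : (C (c ^ 2) * X ^ (2 * m)).natDegree < r.natDegree :=
      (natDegree_C_mul_X_pow_le _ _).trans_lt (by omega)
    rw [error_eq]
    exact degree_lt_degree ((natDegree_sub_le _ _).trans_lt (max_lt leading_part correction_sq))

theorem exists_degree_sub_sq_lt_degree (h2 : (2 : R) ≠ 0) {f P : R[X]}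
    (h : (f - P ^ 2).degree < (P ^ 2).degree) :
    ∃ D : R, D ≠ 0 ∧ ∃ Q : R[X], (C D ^ 2 * f - Q ^ 2).degree < Q.degree := by
  induction hd : (f - P ^ 2).degree using WellFoundedLT.induction generalizing f P with
  | ind d ih =>
    subst hd
    rcases lt_or_ge (f - P ^ 2).degree P.degree with hlt | hge
    · exact ⟨1, one_ne_zero, P, by simpa using hlt⟩
    · obtain ⟨D₁, hD₁, P₁, hdeg, hlt⟩ := exists_degree_sub_sq_lt_degree_sub_sq h2 hge h
      have h₁ : (C D₁ ^ 2 * f - P₁ ^ 2).degree < (P₁ ^ 2).degree := by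
        rw [degree_pow, hdeg, ← degree_pow]
        exact hlt.trans h
      obtain ⟨D₂, hD₂, Q, hQ⟩ := ih _ hlt h₁ rfl
      refine ⟨D₂ * D₁, mul_ne_zero hD₂ hD₁, Q, ?_⟩
      rwa [C_mul, mul_pow, mul_assoc]

theorem isSquare_of_sq_mul_eq_sq [IsIntegrallyClosed R] {d a b : R} (hd : d ≠ 0)
    (h : d ^ 2 * a = b ^ 2) : IsSquare a := by
  obtain ⟨c, rfl⟩ : d ∣ b := (IsIntegrallyClosed.pow_dvd_pow_iff two_ne_zero).mp ⟨a, h.symm⟩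
  refine ⟨c, mul_left_cancel₀ (pow_ne_zero 2 hd) ?_⟩
  rw [h]
  ring

end Domain

theorem abs_le_abs_sq_sub_sq {x y : ℤ} (h : x ^ 2 ≠ y ^ 2) : |y| ≤ |x ^ 2 - y ^ 2| := by
  have hfactor : x ^ 2 - y ^ 2 = (x + y) * (x - y) := sq_sub_sq x y
  have hprod : (x + y) * (x - y) ≠ 0 := hfactor ▸ sub_ne_zero.mpr h
  have hadd : 1 ≤ |x + y| := Int.one_le_abs (left_ne_zero_of_mul hprod)
  have hsub : 1 ≤ |x - y| := Int.one_le_abs (right_ne_zero_of_mul hprod)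
  have two_mul_abs_le : 2 * |y| ≤ |x + y| + |x - y| := by
    calc 2 * |y| = |(x + y) - (x - y)| := by rw [← abs_two, ← abs_mul]; ring_nf
      _ ≤ |x + y| + |x - y| := abs_sub _ _
  rw [hfactor, abs_mul]
  nlinarith

theorem finite_setOf_isSquare_eval {f : ℤ[X]} (heven : Even f.natDegree)
    (hlead : IsSquare f.leadingCoeff) (hf : ¬IsSquare f) :
    {k : ℤ | IsSquare (f.eval k)}.Finite := by
  have hf0 : f ≠ 0 := by
    rintro rfl
    exact hf .zero
  obtain ⟨P, hP⟩ := exists_degree_sub_sq_lt_of_isSquare_leadingCoeff hf0 heven hlead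
  obtain ⟨D, hD, Q, hQ⟩ := exists_degree_sub_sq_lt_degree two_ne_zero hP
  set r := C D ^ 2 * f - Q ^ 2 with hr
  have hr0 : r ≠ 0 := fun h ↦ hf (isSquare_of_sq_mul_eq_sq (C_ne_zero.mpr hD) (sub_eq_zero.mp h))
  refine ((finite_setOfPred_isRoot hr0).union (finite_abs_eval_le_of_degree_lt hQ)).subset ?_
  rintro k ⟨a, ha⟩
  have eval_r : r.eval k = (D * a) ^ 2 - Q.eval k ^ 2 := by
    simp only [hr, eval_sub, eval_mul, eval_pow, eval_C, ha]
    ring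
  by_cases hroot : (D * a) ^ 2 = Q.eval k ^ 2
  · exact .inl (by rw [Set.mem_ofPred_eq, IsRoot, eval_r, hroot, sub_self])
  · exact .inr (by rw [Set.mem_ofPred_eq, eval_r]; exact abs_le_abs_sq_sub_sq hroot)

theorem not_isSquare_of_modEq_two_mod_three {x : ℤ} (h : x ≡ 2 [ZMOD 3]) : ¬IsSquare x := by
  rintro ⟨c, rfl⟩
  have sq_ne_two : ∀ z : ZMod 3, z * z ≠ 2 := by decide
  refine sq_ne_two c ?_
  exact_mod_cast (ZMod.intCast_eq_intCast_iff _ _ 3).mpr h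

theorem degree_eps_lt_degree_delta {R : Type*} [CommRing R] [IsDomain R] {δ ε : ℕ → R[X]}
    (hδ : ∀ n, 2 ≤ n → δ n = δ (n - 1) ^ 2 + ε (n - 1) ^ 2)
    (hε : ∀ n, 2 ≤ n → X * ε n = δ (n - 1) * ε (n - 1))
    (h₁ : (ε 1).degree < (δ 1).degree) {n : ℕ} (hn : 1 ≤ n) : (ε n).degree < (δ n).degree := by
  induction n, hn using Nat.le_induction with
  | base => exact h₁
  | succ n hn ih =>
    have hδ' : δ (n + 1) = δ n ^ 2 + ε n ^ 2 := hδ (n + 1) (by omega)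
    have hε' : X * ε (n + 1) = δ n * ε n := hε (n + 1) (by omega)
    have hδ0 : δ n ≠ 0 := ne_zero_of_degree_gt ih
    calc (ε (n + 1)).degree ≤ (X * ε (n + 1)).degree := by
          rw [degree_mul, degree_X]
          exact le_add_of_nonneg_left zero_le_one
      _ = (δ n).degree + (ε n).degree := by rw [hε', degree_mul]
      _ < (δ n).degree + (δ n).degree :=
          WithBot.add_lt_add_left (degree_ne_bot.mpr hδ0) ih
      _ = (δ n ^ 2).degree := by rw [sq, degree_mul]
      _ = (δ (n + 1)).degree := by
          rw [hδ', degree_add_eq_left_of_degree_lt (degree_sq_lt_degree_sq ih)]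

theorem eval_one_modEq_mod_three {δ ε : ℕ → ℤ[X]}
    (hδ : ∀ n, 2 ≤ n → δ n = δ (n - 1) ^ 2 + ε (n - 1) ^ 2)
    (hε : ∀ n, 2 ≤ n → X * ε n = δ (n - 1) * ε (n - 1))
    (hδ₁ : (δ 1).eval 1 ≡ 2 [ZMOD 3]) (hε₁ : (ε 1).eval 1 ^ 2 ≡ 1 [ZMOD 3]) {n : ℕ} (hn : 1 ≤ n) :
    (δ n).eval 1 ≡ 2 [ZMOD 3] ∧ (ε n).eval 1 ^ 2 ≡ 1 [ZMOD 3] := by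
  induction n, hn using Nat.le_induction with
  | base => exact ⟨hδ₁, hε₁⟩
  | succ n hn ih =>
    obtain ⟨hδn, hεn⟩ := ih
    have eval_delta : (δ (n + 1)).eval 1 = (δ n).eval 1 ^ 2 + (ε n).eval 1 ^ 2 := by
      simp [hδ (n + 1) (by omega)]
    have eval_eps : (ε (n + 1)).eval 1 = (δ n).eval 1 * (ε n).eval 1 := by
      simpa using congrArg (eval 1) (hε (n + 1) (by omega))
    rw [eval_delta, eval_eps, mul_pow]
    exact ⟨(hδn.pow 2).add hεn, (hδn.pow 2).mul hεn⟩

/-- for the sequences `δ_n, ε_n ∈ ℤ[k]` given by `δ_1 = 2k²`, `ε_1 = k`,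
`δ_n = δ_{n−1}² + ε_{n−1}²` and `k·ε_n = δ_{n−1}·ε_{n−1}` (for `n ≥ 2`): for every fixed
`n ≥ 2`, the set of nonzero integers `k₀` such that `δ_n(k₀)` is a square in `ℤ` is finite. -/
theorem stmt_16 (δ ε : ℕ → Polynomial ℤ)
    (hδ1 : δ 1 = Polynomial.C 2 * Polynomial.X ^ 2)
    (hε1 : ε 1 = Polynomial.X)
    (hδ : ∀ n, 2 ≤ n → δ n = (δ (n - 1)) ^ 2 + (ε (n - 1)) ^ 2)
    (hε : ∀ n, 2 ≤ n → Polynomial.X * ε n = δ (n - 1) * ε (n - 1))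
    (n : ℕ) (hn : 2 ≤ n) :
    {k₀ : ℤ | k₀ ≠ 0 ∧ ∃ a : ℤ, (δ n).eval k₀ = a ^ 2}.Finite := by
  have hdeg : (ε (n - 1) ^ 2).degree < (δ (n - 1) ^ 2).degree := by
    refine degree_sq_lt_degree_sq (degree_eps_lt_degree_delta hδ hε ?_ (by omega))
    rw [hε1, hδ1, degree_X, degree_C_mul_X_pow 2 two_ne_zero]
    exact Nat.one_lt_ofNat
  have heven : Even (δ n).natDegree := by
    rw [hδ n hn, natDegree_add_eq_left_of_degree_lt hdeg, natDegree_pow]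
    exact even_two_mul _
  have hlead : IsSquare (δ n).leadingCoeff := by
    rw [hδ n hn, leadingCoeff_add_of_degree_lt' hdeg, leadingCoeff_pow]
    exact IsSquare.sq _
  have hsq : ¬IsSquare (δ n) := by
    intro h
    refine not_isSquare_of_modEq_two_mod_three ?_ (h.map (evalRingHom 1))
    exact (eval_one_modEq_mod_three hδ hε (by simp [hδ1]) (by simp [hε1]) (by omega)).1
  refine (finite_setOf_isSquare_eval heven hlead hsq).subset ?_
  rintro k ⟨-, a, ha⟩
  exact ⟨a, by rw [ha, sq]⟩
end
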